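/- Let n ≥ 2 and let t : {1,…,2n} → {A,B} be a type assignment with t(1)=A, t(2)=B, t(2n)=A, and t(i)=A for some i with 2 < i < 2n. Then every stable matching of the instance contains the pair {2,2n}, and the stable matchings of the instance are exactly the sets M' ∪ {{2,2n}} where M' ranges over the stable matchings of the restricted 1-attribute instance on {1} ∪ {3,…,2n−1}. -/

import Mathlib

/-!
Write `N = 2n`. In a stable matching, person 2 (type B) has `N` as first choice, and `N` (type A)
prefers only person 1 to person 2. So if 2 and `N` are not matched, then `N` must be matched to 1.
But `N` is the last choice of 1, while 1 is the first choice of the type A person `i` with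
`2 < i < N`, so `{1, i}` blocks. Hence `{2, N}` is in every stable matching
(`pair_mem_of_isStable`).

Adding or removing a pair `{a, b}` turns matchings of `S` into matchings of `S ∪ {a, b}` and
conversely (`IsMatching.union_pair`, `IsMatching.erase_pair`), and does not change which pairs
inside `S` are blocking (`isBlocking_union_pair`). Finally, 2 and `N` belong to no blocking pair
once they are matched together: 2 has its first choice, and `N` could only block with 1, for whom
`N` is the last choice.
-/

/-- The two preference types in the 1-attribute stable roommate model. -/
inductive AttrType : Type
  | A : AttrType
  | B : AttrType
  deriving DecidableEq

/-- In the 1-attribute instance with type assignment `t`, person `i`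
prefers person `j` to person `k`: type `A` people prefer smaller indices,
type `B` people prefer larger indices. -/
def Prefers (t : ℕ → AttrType) (i j k : ℕ) : Prop :=
  match t i with
  | AttrType.A => j < k
  | AttrType.B => k < j

/-- `M` is a matching of the people in `S`: a partition of `S` into
unordered pairs. -/
def IsMatching (S : Finset ℕ) (M : Finset (Finset ℕ)) : Prop :=
  (∀ p ∈ M, ∃ i j, i ≠ j ∧ i ∈ S ∧ j ∈ S ∧ p = {i, j}) ∧
  (∀ i ∈ S, ∃! p, p ∈ M ∧ i ∈ p)

/-- The pair `{i, j}` is a blocking pair for the matching `M`: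
it is not in `M`, and each of `i`, `j` prefers the other to their
partner in `M`. -/
def IsBlocking (t : ℕ → AttrType) (M : Finset (Finset ℕ)) (i j : ℕ) : Prop :=
  i ≠ j ∧ ({i, j} : Finset ℕ) ∉ M ∧
  (∀ k, ({i, k} : Finset ℕ) ∈ M → k ≠ i → Prefers t i j k) ∧
  (∀ k, ({j, k} : Finset ℕ) ∈ M → k ≠ j → Prefers t j i k)

/-- `M` is a stable matching of the 1-attribute instance on the set of
people `S` with type assignment `t`. -/
def IsStable (t : ℕ → AttrType) (S : Finset ℕ) (M : Finset (Finset ℕ)) : Prop :=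
  IsMatching S M ∧ ∀ i ∈ S, ∀ j ∈ S, ¬ IsBlocking t M i j

lemma prefers_A {t : ℕ → AttrType} {i j k : ℕ} (h : t i = AttrType.A) :
    Prefers t i j k ↔ j < k := by
  simp [Prefers, h]

lemma prefers_B {t : ℕ → AttrType} {i j k : ℕ} (h : t i = AttrType.B) :
    Prefers t i j k ↔ k < j := by
  simp [Prefers, h]

lemma IsMatching.exists_partner {S : Finset ℕ} {M : Finset (Finset ℕ)} (h : IsMatching S M)
    {i : ℕ} (hi : i ∈ S) : ∃ k ∈ S, k ≠ i ∧ ({i, k} : Finset ℕ) ∈ M := by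
  obtain ⟨p, ⟨hp, hip⟩, -⟩ := h.2 i hi
  obtain ⟨a, b, hab, ha, hb, rfl⟩ := h.1 p hp
  simp only [Finset.mem_insert, Finset.mem_singleton] at hip
  rcases hip with rfl | rfl
  · exact ⟨b, hb, hab.symm, hp⟩
  · exact ⟨a, ha, hab, by rwa [Finset.pair_comm]⟩

lemma IsMatching.mem_of_pair_mem {S : Finset ℕ} {M : Finset (Finset ℕ)} (h : IsMatching S M)
    {p : Finset ℕ} (hp : p ∈ M) {i : ℕ} (hi : i ∈ p) : i ∈ S := by
  obtain ⟨a, b, -, ha, hb, rfl⟩ := h.1 p hp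
  simp only [Finset.mem_insert, Finset.mem_singleton] at hi
  rcases hi with rfl | rfl <;> assumption

lemma IsMatching.partner_unique {S : Finset ℕ} {M : Finset (Finset ℕ)} (h : IsMatching S M)
    {i k l : ℕ} (hk : ({i, k} : Finset ℕ) ∈ M) (hl : ({i, l} : Finset ℕ) ∈ M)
    (hki : k ≠ i) : k = l := by
  have hi : i ∈ S := h.mem_of_pair_mem hk (by simp)
  have he : ({i, k} : Finset ℕ) = {i, l} :=
    (h.2 i hi).unique ⟨hk, by simp⟩ ⟨hl, by simp⟩
  have : k ∈ ({i, l} : Finset ℕ) := he ▸ (by simp)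
  simpa [hki] using this

lemma IsMatching.union_pair {S : Finset ℕ} {M : Finset (Finset ℕ)} (h : IsMatching S M)
    {a b : ℕ} (hab : a ≠ b) (ha : a ∉ S) (hb : b ∉ S) :
    IsMatching (insert a (insert b S)) (M ∪ {({a, b} : Finset ℕ)}) := by
  refine ⟨fun p hp => ?_, fun i hi => ?_⟩
  · rcases Finset.mem_union.1 hp with hp | hp
    · obtain ⟨i, j, hij, hi, hj, rfl⟩ := h.1 p hp
      exact ⟨i, j, hij, by simp [hi], by simp [hj], rfl⟩
    · exact ⟨a, b, hab, by simp, by simp, Finset.mem_singleton.1 hp⟩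
  · by_cases hiS : i ∈ S
    · obtain ⟨p, ⟨hp, hip⟩, hu⟩ := h.2 i hiS
      refine ⟨p, ⟨Finset.mem_union_left _ hp, hip⟩, fun q ⟨hq, hiq⟩ => ?_⟩
      rcases Finset.mem_union.1 hq with hq | hq
      · exact hu q ⟨hq, hiq⟩
      · rw [Finset.mem_singleton.1 hq] at hiq
        simp only [Finset.mem_insert, Finset.mem_singleton] at hiq
        rcases hiq with rfl | rfl <;> contradiction
    · refine ⟨{a, b}, ⟨by simp, by simpa [hiS] using hi⟩, fun q ⟨hq, hiq⟩ => ?_⟩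
      rcases Finset.mem_union.1 hq with hq | hq
      · exact absurd (h.mem_of_pair_mem hq hiq) hiS
      · exact Finset.mem_singleton.1 hq

lemma IsMatching.erase_pair {S : Finset ℕ} {M : Finset (Finset ℕ)} {a b : ℕ}
    (h : IsMatching (insert a (insert b S)) M) (hab : ({a, b} : Finset ℕ) ∈ M)
    (ha : a ∉ S) (hb : b ∉ S) : IsMatching S (M.erase {a, b}) := by
  -- A pair of `M` meeting `{a, b}` equals it, so every other pair lies inside `S`.
  have key : ∀ p ∈ M.erase {a, b}, ∀ i ∈ p, i ∈ S := by
    intro p hp i hip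
    obtain ⟨hne, hp⟩ := Finset.mem_erase.1 hp
    have hi := h.mem_of_pair_mem hp hip
    by_contra hiS
    exact hne ((h.2 i hi).unique ⟨hp, hip⟩ ⟨hab, by simpa [hiS] using hi⟩)
  refine ⟨fun p hp => ?_, fun i hi => ?_⟩
  · obtain ⟨i, j, hij, -, -, rfl⟩ := h.1 p (Finset.mem_of_mem_erase hp)
    exact ⟨i, j, hij, key _ hp i (by simp), key _ hp j (by simp), rfl⟩
  · obtain ⟨p, ⟨hp, hip⟩, hu⟩ := h.2 i (by simp [hi])
    refine ⟨p, ⟨Finset.mem_erase.2 ⟨?_, hp⟩, hip⟩,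
      fun q ⟨hq, hiq⟩ => hu q ⟨Finset.mem_of_mem_erase hq, hiq⟩⟩
    rintro rfl
    simp only [Finset.mem_insert, Finset.mem_singleton] at hip
    rcases hip with rfl | rfl <;> contradiction

lemma IsBlocking.symm {t : ℕ → AttrType} {M : Finset (Finset ℕ)} {i j : ℕ}
    (h : IsBlocking t M i j) : IsBlocking t M j i :=
  ⟨h.1.symm, by rw [Finset.pair_comm]; exact h.2.1, h.2.2.2, h.2.2.1⟩

lemma isBlocking_union_pair {t : ℕ → AttrType} {M : Finset (Finset ℕ)} {a b i j : ℕ}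
    (hia : i ≠ a) (hib : i ≠ b) (hja : j ≠ a) (hjb : j ≠ b) :
    IsBlocking t (M ∪ {({a, b} : Finset ℕ)}) i j ↔ IsBlocking t M i j := by
  have key : ∀ x, x ≠ a → x ≠ b → ∀ k,
      ({x, k} : Finset ℕ) ∈ M ∪ {({a, b} : Finset ℕ)} ↔ ({x, k} : Finset ℕ) ∈ M := by
    intro x hxa hxb k
    rw [Finset.mem_union, Finset.mem_singleton, or_iff_left]
    intro he
    have : x ∈ ({a, b} : Finset ℕ) := he ▸ (by simp)
    simp [hxa, hxb] at this
  simp only [IsBlocking, key i hia hib, key j hja hjb]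

lemma pair_mem_of_isStable {n : ℕ} {t : ℕ → AttrType}
    (h1 : t 1 = AttrType.A) (h2 : t 2 = AttrType.B) (h3 : t (2 * n) = AttrType.A)
    (hi : ∃ i, 2 < i ∧ i < 2 * n ∧ t i = AttrType.A)
    {M : Finset (Finset ℕ)} (hM : IsStable t (Finset.Icc 1 (2 * n)) M) :
    ({2, 2 * n} : Finset ℕ) ∈ M := by
  obtain ⟨i, hi2, hiN, hiA⟩ := hi
  obtain ⟨hmat, hst⟩ := hM
  by_contra hnot
  have bounds : ∀ {x k : ℕ}, ({x, k} : Finset ℕ) ∈ M → 1 ≤ k ∧ k ≤ 2 * n := fun hk =>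
    Finset.mem_Icc.1 (hmat.mem_of_pair_mem hk (by simp))
  have hN1 : ({2 * n, 1} : Finset ℕ) ∈ M := by
    by_contra hN1
    refine hst 2 (by simp; omega) (2 * n) (by simp; omega) ⟨by omega, hnot, fun k hk _ => ?_,
      fun k hk _ => ?_⟩
    · have := bounds hk
      have : k ≠ 2 * n := by rintro rfl; exact hnot hk
      rw [prefers_B h2]; omega
    · have := bounds hk
      have : k ≠ 1 := by rintro rfl; exact hN1 hk
      have : k ≠ 2 := by rintro rfl; exact hnot (by rwa [Finset.pair_comm])
      rw [prefers_A h3]; omega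
  have h1N : ({1, 2 * n} : Finset ℕ) ∈ M := by rwa [Finset.pair_comm]
  have h1i : ({1, i} : Finset ℕ) ∉ M := fun h => by
    have := hmat.partner_unique h h1N (by omega)
    omega
  refine hst 1 (by simp; omega) i (by simp; omega) ⟨by omega, h1i, fun k hk hk1 => ?_,
    fun k hk _ => ?_⟩
  · have := hmat.partner_unique hk h1N hk1
    rw [prefers_A h1]; omega
  · have := bounds hk
    have : k ≠ 1 := by rintro rfl; exact h1i (by rwa [Finset.pair_comm])
    rw [prefers_A hiA]; omega

/-- Case (M2): types 1A, 2B, (2n)A and iA for some 2 < i < 2n.  Every stable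
matching contains the pair {2,2n}, and the stable matchings are exactly the
stable matchings of the restricted instance on {1} ∪ {3,…,2n-1} together
with {2,2n}. -/
theorem one_attribute_case_M2 (n : ℕ) (hn : 2 ≤ n) (t : ℕ → AttrType)
    (h1 : t 1 = AttrType.A) (h2 : t 2 = AttrType.B) (h3 : t (2 * n) = AttrType.A)
    (hi : ∃ i, 2 < i ∧ i < 2 * n ∧ t i = AttrType.A) :
    (∀ M : Finset (Finset ℕ), IsStable t (Finset.Icc 1 (2 * n)) M →
      ({2, 2 * n} : Finset ℕ) ∈ M) ∧
    (∀ M : Finset (Finset ℕ), IsStable t (Finset.Icc 1 (2 * n)) M ↔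
      ∃ M' : Finset (Finset ℕ),
        IsStable t (insert 1 (Finset.Icc 3 (2 * n - 1))) M' ∧
        M = M' ∪ {({2, 2 * n} : Finset ℕ)}) := by
  refine ⟨fun M hM => pair_mem_of_isStable h1 h2 h3 hi hM, fun M => ?_⟩
  have hS : Finset.Icc 1 (2 * n) =
      insert 2 (insert (2 * n) (insert 1 (Finset.Icc 3 (2 * n - 1)))) := by
    ext x
    simp only [Finset.mem_insert, Finset.mem_Icc]
    omega
  have h2S : 2 ∉ insert 1 (Finset.Icc 3 (2 * n - 1)) := by simp
  have hNS : 2 * n ∉ insert 1 (Finset.Icc 3 (2 * n - 1)) := by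
    simp only [Finset.mem_insert, Finset.mem_Icc]; omega
  constructor
  · intro hM
    have hp := pair_mem_of_isStable h1 h2 h3 hi hM
    have hMe : M = M.erase {2, 2 * n} ∪ {({2, 2 * n} : Finset ℕ)} := by
      rw [Finset.union_comm, ← Finset.insert_eq, Finset.insert_erase hp]
    refine ⟨M.erase {2, 2 * n}, ⟨(hS ▸ hM.1).erase_pair hp h2S hNS, fun i hiS j hjS hb => ?_⟩, hMe⟩
    refine hM.2 i (by rw [hS]; simp only [Finset.mem_insert] at hiS ⊢; tauto) j
      (by rw [hS]; simp only [Finset.mem_insert] at hjS ⊢; tauto) ?_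
    rw [hMe]
    exact (isBlocking_union_pair (ne_of_mem_of_not_mem hiS h2S) (ne_of_mem_of_not_mem hiS hNS)
      (ne_of_mem_of_not_mem hjS h2S) (ne_of_mem_of_not_mem hjS hNS)).2 hb
  · rintro ⟨M', hM', rfl⟩
    have hmat : IsMatching (Finset.Icc 1 (2 * n)) (M' ∪ {({2, 2 * n} : Finset ℕ)}) :=
      hS ▸ hM'.1.union_pair (by omega) h2S hNS
    have hp : ({2, 2 * n} : Finset ℕ) ∈ M' ∪ {({2, 2 * n} : Finset ℕ)} := by simp
    have no2 : ∀ j ∈ Finset.Icc 1 (2 * n),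
        ¬ IsBlocking t (M' ∪ {({2, 2 * n} : Finset ℕ)}) 2 j := by
      intro j hj hb
      have := (prefers_B h2).1 (hb.2.2.1 (2 * n) hp (by omega))
      have := Finset.mem_Icc.1 hj
      omega
    have noN : ∀ j ∈ Finset.Icc 1 (2 * n),
        ¬ IsBlocking t (M' ∪ {({2, 2 * n} : Finset ℕ)}) (2 * n) j := by
      intro j hj hb
      have hlt := (prefers_A h3).1 (hb.2.2.1 2 (Finset.pair_comm 2 (2 * n) ▸ hp) (by omega))
      have hj' := Finset.mem_Icc.1 hj
      obtain rfl : j = 1 := by omega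
      obtain ⟨k, hkS, hk1, hk⟩ := hmat.exists_partner hj
      have := (prefers_A h1).1 (hb.2.2.2 k hk hk1)
      have := Finset.mem_Icc.1 hkS
      omega
    refine ⟨hmat, fun i hiS j hjS hb => ?_⟩
    by_cases hi2 : i = 2
    · subst hi2; exact no2 j hjS hb
    by_cases hiN : i = 2 * n
    · subst hiN; exact noN j hjS hb
    by_cases hj2 : j = 2
    · subst hj2; exact no2 i hiS hb.symm
    by_cases hjN : j = 2 * n
    · subst hjN; exact noN i hiS hb.symm
    refine hM'.2 i ?_ j ?_ ((isBlocking_union_pair hi2 hiN hj2 hjN).1 hb)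
    · simpa only [hS, Finset.mem_insert, hi2, hiN, false_or] using hiS
    · simpa only [hS, Finset.mem_insert, hj2, hjN, false_or] using hjS
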